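/- Let B_m : ℝ² → ℝ (m ∈ ℤ) be smooth functions of (x, t) such that for every m ∈ ℤ the first and third flows of the Volterra hierarchy hold: ∂_x B_m = B_m (B_{m+1} − B_{m−1}) and ∂_t B_m = B_m (V6_{m+1} − V6_{m−1}). Then for every n ∈ ℤ the functions φ := B_n and ψ := B_{n−1} satisfy the system of conservation laws ∂_t φ = ∂_x (φ³ + 3(ψ + 2φ) φ ψ + 3(φ + ψ) ∂_x φ + ∂_x² φ) and ∂_t ψ = ∂_x (ψ³ + 3(φ + 2ψ) φ ψ − 3(φ + ψ) ∂_x ψ + ∂_x² ψ). -/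

import Mathlib

/-!
The right-hand side of the third flow is itself an `x`-derivative: the first flow gives
`∂ₓ V₆,ₘ = Bₘ (V₆,ₘ₊₁ - V₆,ₘ₋₁)`, so that `∂ₜ Bₘ = ∂ₓ V₆,ₘ`. Both equations of the system are this
one, at `m = n` and at `m = n - 1`, because the first flow also trades the lattice variables in
`V₆,ₘ` other than `φ` and `ψ` for `x`-derivatives of `Bₘ`.
-/

/-- The density `V₄,ₘ` of the Volterra lattice at a configuration `b : ℤ → R` of the lattice
variables at a fixed time; it drives the second flow of the hierarchy. -/
def volterraV4 {R : Type*} [Add R] [Mul R] (b : ℤ → R) (m : ℤ) : R :=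
  b m * (b (m - 1) + b m + b (m + 1))

/-- The density `V₆,ₘ` of the Volterra lattice at a configuration `b : ℤ → R` of the lattice
variables at a fixed time; it drives the third flow of the hierarchy. -/
def volterraV6 {R : Type*} [Add R] [Mul R] (b : ℤ → R) (m : ℤ) : R :=
  b m * (b (m - 1) * b (m + 1) + volterraV4 b (m - 1) + volterraV4 b m + volterraV4 b (m + 1))

/-- The curve `b` of lattice configurations solves the flow `bₘ' = bₘ (Vₘ₊₁ - Vₘ₋₁)` of the
Volterra hierarchy. Since `V₂ = b`, the first flow is `IsVolterraFlow id b`, and the third one is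
`IsVolterraFlow volterraV6 b`. -/
def IsVolterraFlow {𝕜 A : Type*} [NontriviallyNormedField 𝕜] [NormedCommRing A] [NormedAlgebra 𝕜 A]
    (V : (ℤ → A) → ℤ → A) (b : ℤ → 𝕜 → A) : Prop :=
  ∀ m s, HasDerivAt (b m) (b m s * (V (b · s) (m + 1) - V (b · s) (m - 1))) s

namespace IsVolterraFlow

variable {𝕜 A : Type*} [NontriviallyNormedField 𝕜] [NormedCommRing A] [NormedAlgebra 𝕜 A]
  {b : ℤ → 𝕜 → A}

lemma of_deriv {V : (ℤ → A) → ℤ → A} (hb : ∀ m, Differentiable 𝕜 (b m))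
    (h : ∀ m s, deriv (b m) s = b m s * (V (b · s) (m + 1) - V (b · s) (m - 1))) :
    IsVolterraFlow V b :=
  fun m s => (hb m s).hasDerivAt.congr_deriv (h m s)

lemma hasDerivAt (hb : IsVolterraFlow id b) (m : ℤ) (x : 𝕜) :
    HasDerivAt (b m) (b m x * (b (m + 1) x - b (m - 1) x)) x :=
  hb m x

lemma hasDerivAt_volterraV4 (hb : IsVolterraFlow id b) (m : ℤ) (x : 𝕜) :
    HasDerivAt (fun y => volterraV4 (b · y) m)
      (b m x * (volterraV4 (b · x) (m + 1) - volterraV4 (b · x) (m - 1))) x := by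
  have h (k : ℤ) := hb.hasDerivAt k x
  refine ((h m).fun_mul (((h (m - 1)).fun_add (h m)).fun_add (h (m + 1)))).congr_deriv ?_
  simp only [volterraV4, add_sub_cancel_right, sub_add_cancel]
  ring

lemma hasDerivAt_volterraV6 (hb : IsVolterraFlow id b) (m : ℤ) (x : 𝕜) :
    HasDerivAt (fun y => volterraV6 (b · y) m)
      (b m x * (volterraV6 (b · x) (m + 1) - volterraV6 (b · x) (m - 1))) x := by
  have h (k : ℤ) := hb.hasDerivAt k x
  have hV4 (k : ℤ) := hb.hasDerivAt_volterraV4 k x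
  refine ((h m).fun_mul (((((h (m - 1)).fun_mul (h (m + 1))).fun_add (hV4 (m - 1))).fun_add
    (hV4 m)).fun_add (hV4 (m + 1)))).congr_deriv ?_
  simp only [volterraV6, volterraV4, add_sub_cancel_right, sub_add_cancel]
  ring

lemma deriv_eq (hb : IsVolterraFlow id b) (m : ℤ) :
    deriv (b m) = fun x => b m x * (b (m + 1) x - b (m - 1) x) :=
  funext fun x => (hb.hasDerivAt m x).deriv

lemma deriv_deriv (hb : IsVolterraFlow id b) (m : ℤ) (x : 𝕜) :
    deriv (deriv (b m)) x = b m x * ((b (m + 1) x - b (m - 1) x) ^ 2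
      + b (m + 1) x * (b (m + 1 + 1) x - b m x) - b (m - 1) x * (b m x - b (m - 1 - 1) x)) := by
  have h (k : ℤ) := hb.hasDerivAt k x
  rw [hb.deriv_eq, ((h m).fun_mul ((h (m + 1)).fun_sub (h (m - 1)))).deriv]
  simp only [add_sub_cancel_right, sub_add_cancel]
  ring

lemma volterraV6_eq_deriv_pred (hb : IsVolterraFlow id b) (m : ℤ) (x : 𝕜) :
    volterraV6 (b · x) m =
      b m x ^ 3 + 3 * (b (m - 1) x + 2 * b m x) * b m x * b (m - 1) x
        + 3 * (b m x + b (m - 1) x) * deriv (b m) x + deriv (deriv (b m)) x := by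
  rw [hb.deriv_deriv, hb.deriv_eq]
  simp only [volterraV6, volterraV4, add_sub_cancel_right, sub_add_cancel]
  ring

lemma volterraV6_eq_deriv_succ (hb : IsVolterraFlow id b) (m : ℤ) (x : 𝕜) :
    volterraV6 (b · x) m =
      b m x ^ 3 + 3 * (b (m + 1) x + 2 * b m x) * b (m + 1) x * b m x
        - 3 * (b (m + 1) x + b m x) * deriv (b m) x + deriv (deriv (b m)) x := by
  rw [hb.deriv_deriv, hb.deriv_eq]
  simp only [volterraV6, volterraV4, add_sub_cancel_right, sub_add_cancel]
  ring

lemma deriv_eq_deriv_volterraV6 {B : ℤ → 𝕜 → 𝕜 → A} {x t : 𝕜}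
    (hx : IsVolterraFlow id fun m x' => B m x' t) (ht : IsVolterraFlow volterraV6 fun m => B m x)
    (m : ℤ) : deriv (B m x) t = deriv (fun x' => volterraV6 (B · x' t) m) x :=
  (ht m t).deriv.trans (hx.hasDerivAt_volterraV6 m x).deriv.symm

end IsVolterraFlow

theorem volterra_first_third_flows_conservation_laws_general {𝕜 A : Type*}
    [NontriviallyNormedField 𝕜] [NormedCommRing A] [NormedAlgebra 𝕜 A] {B : ℤ → 𝕜 → 𝕜 → A}
    {x t : 𝕜} (hx : IsVolterraFlow id fun m x' => B m x' t)
    (ht : IsVolterraFlow volterraV6 fun m => B m x) (n : ℤ) :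
    deriv (fun t' => B n x t') t =
      deriv (fun x' =>
        B n x' t ^ 3 + 3 * (B (n - 1) x' t + 2 * B n x' t) * B n x' t * B (n - 1) x' t
          + 3 * (B n x' t + B (n - 1) x' t) * deriv (fun x'' => B n x'' t) x'
          + deriv (fun x'' => deriv (fun x''' => B n x''' t) x'') x') x
    ∧
    deriv (fun t' => B (n - 1) x t') t =
      deriv (fun x' =>
        B (n - 1) x' t ^ 3 + 3 * (B n x' t + 2 * B (n - 1) x' t) * B n x' t * B (n - 1) x' t
          - 3 * (B n x' t + B (n - 1) x' t) * deriv (fun x'' => B (n - 1) x'' t) x'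
          + deriv (fun x'' => deriv (fun x''' => B (n - 1) x''' t) x'') x') x := by
  have hφ := hx.volterraV6_eq_deriv_pred n
  have hψ := hx.volterraV6_eq_deriv_succ (n - 1)
  rw [sub_add_cancel] at hψ
  exact ⟨(hx.deriv_eq_deriv_volterraV6 ht n).trans (congrArg (deriv · x) (funext hφ)),
    (hx.deriv_eq_deriv_volterraV6 ht (n - 1)).trans (congrArg (deriv · x) (funext hψ))⟩

/-- If the family `B m` solves the first and third flows of the Volterra
hierarchy (with respect to `x = t₂` and `t = t₆`), then for every `n` the pair
`φ = B n`, `ψ = B (n-1)` satisfies the stated system of conservation laws. -/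
theorem volterra_first_third_flows_conservation_laws
    (B V4 V6 : ℤ → ℝ → ℝ → ℝ)
    (hB : ∀ m : ℤ, ContDiff ℝ (⊤ : ℕ∞) (fun p : ℝ × ℝ => B m p.1 p.2))
    (hV4 : ∀ (m : ℤ) (x t : ℝ),
      V4 m x t = B m x t * (B (m - 1) x t + B m x t + B (m + 1) x t))
    (hV6 : ∀ (m : ℤ) (x t : ℝ),
      V6 m x t = B m x t *
        (B (m - 1) x t * B (m + 1) x t + V4 (m - 1) x t + V4 m x t + V4 (m + 1) x t))
    (hx : ∀ (m : ℤ) (x t : ℝ),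
      deriv (fun x' => B m x' t) x = B m x t * (B (m + 1) x t - B (m - 1) x t))
    (ht : ∀ (m : ℤ) (x t : ℝ),
      deriv (fun t' => B m x t') t = B m x t * (V6 (m + 1) x t - V6 (m - 1) x t))
    (n : ℤ) (x t : ℝ) :
    deriv (fun t' => B n x t') t =
      deriv (fun x' =>
        B n x' t ^ 3 + 3 * (B (n - 1) x' t + 2 * B n x' t) * B n x' t * B (n - 1) x' t
          + 3 * (B n x' t + B (n - 1) x' t) * deriv (fun x'' => B n x'' t) x'
          + deriv (fun x'' => deriv (fun x''' => B n x''' t) x'') x') x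
    ∧
    deriv (fun t' => B (n - 1) x t') t =
      deriv (fun x' =>
        B (n - 1) x' t ^ 3 + 3 * (B n x' t + 2 * B (n - 1) x' t) * B n x' t * B (n - 1) x' t
          - 3 * (B n x' t + B (n - 1) x' t) * deriv (fun x'' => B (n - 1) x'' t) x'
          + deriv (fun x'' => deriv (fun x''' => B (n - 1) x''' t) x'') x') x := by
  have hV6_eq (m : ℤ) (s : ℝ) : V6 m x s = volterraV6 (B · x s) m := by
    simp only [hV6, hV4, volterraV6, volterraV4]
  have hdiff (m : ℤ) := (hB m).differentiable (by simp)
  have hfirst : IsVolterraFlow id fun m x' => B m x' t :=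
    .of_deriv (fun m => (hdiff m).comp (by fun_prop : Differentiable ℝ fun x' => (x', t)))
      (hx · · t)
  have hthird : IsVolterraFlow volterraV6 fun m => B m x :=
    .of_deriv (fun m => (hdiff m).comp (by fun_prop : Differentiable ℝ fun t' => (x, t')))
      fun m s => by rw [ht, hV6_eq, hV6_eq]
  exact volterra_first_third_flows_conservation_laws_general hfirst hthird n
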